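/- There exists ε₀ > 0, depending only on (V, μ, W), such that for every ε ∈ (0, ε₀) the constant function v ≡ log(ε/|V|) is the unique solution v : V → ℝ of the equation Lv(x) = e^{v(x)} − ε/|V| for all x ∈ V. -/

import Mathlib

open Real Finset

variable {V : Type*}

/-- Discrete integral: `∫_V f dμ = Σ_x μ(x) f(x)`. -/
noncomputable def intV [Fintype V] (μ f : V → ℝ) : ℝ := ∑ x, μ x * f x

/-- Volume `|V| = Σ_x μ(x)`. -/
noncomputable def volV [Fintype V] (μ : V → ℝ) : ℝ := ∑ x, μ x

/-- The nonlocal (fractional graph Laplacian type) operator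
`Lu(x) = (1/μ(x)) Σ_{y ≠ x} W(x,y)(u(x) − u(y))`. -/
noncomputable def opL [Fintype V] [DecidableEq V] (μ : V → ℝ) (W : V → V → ℝ)
    (u : V → ℝ) (x : V) : ℝ :=
  (1 / μ x) * ∑ y ∈ univ.filter (fun y => y ≠ x), W x y * (u x - u y)

/-- Gradient form `∇u·∇v(x) = (1/(2μ(x))) Σ_{y ≠ x} W(x,y)(u(x)−u(y))(v(x)−v(y))`. -/
noncomputable def gradForm [Fintype V] [DecidableEq V] (μ : V → ℝ) (W : V → V → ℝ)
    (u v : V → ℝ) (x : V) : ℝ :=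
  (1 / (2 * μ x)) * ∑ y ∈ univ.filter (fun y => y ≠ x), W x y * (u x - u y) * (v x - v y)

/-- `|∇u|²(x) = ∇u·∇u(x)`. -/
noncomputable def gradSq [Fintype V] [DecidableEq V] (μ : V → ℝ) (W : V → V → ℝ)
    (u : V → ℝ) (x : V) : ℝ := gradForm μ W u u x

/-! The argument is a maximum principle. Let `v` be a solution, with maximum at `a`, minimum at `b`
and oscillation `t = v a - v b`, and put `q = ε / |V|`. If all jump rates `W x y / μ x` with `x ≠ y`
are at least `c`, then `L v a ≥ c t` and `L v b ≤ -c t`, so that `exp (v a) ≥ q + c t` and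
`exp (v b) ≤ q - c t`. As `exp (v a) = exp (v b) * exp t`, this gives `q + c t ≤ (q - c t) * exp t`.
If `q ≤ c`, the right side is at most `q (1 - t) exp t ≤ q`, whence `t = 0`. -/

theorem sub_mul_exp_lt_add {c q t : ℝ} (hq : 0 < q) (hqc : q ≤ c) (ht : 0 < t) :
    (q - c * t) * exp t < q + c * t := by
  calc (q - c * t) * exp t ≤ (q - q * t) * exp t := by gcongr
    _ = q * (1 - t) * exp t := by ring
    _ ≤ q * exp (-t) * exp t := by gcongr; exact one_sub_le_exp_neg t
    _ = q := by rw [mul_assoc, ← exp_add, neg_add_cancel, exp_zero, mul_one]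
    _ < q + c * t := lt_add_of_pos_right q (mul_pos (hq.trans_le hqc) ht)

theorem exists_pos_forall_le_of_forall_pos {ι α : Type*} [Finite ι] [AddCommMonoid α]
    [LinearOrder α] [IsOrderedCancelAddMonoid α] [Nontrivial α] [DenselyOrdered α]
    [ExistsAddOfLE α] {p : ι → Prop} {f : ι → α}
    (hf : ∀ i, p i → 0 < f i) : ∃ c, 0 < c ∧ ∀ i, p i → c ≤ f i := by
  obtain ⟨c, hc, hcf⟩ := Pi.exists_forall_pos_add_lt (x := 0) (y := fun i : {i // p i} => f i)
    fun i => hf i i.2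
  refine ⟨c, hc, fun i hi => ?_⟩
  simpa only [Pi.zero_apply, zero_add] using (hcf ⟨i, hi⟩).le

theorem volV_pos [Fintype V] [Nonempty V] {μ : V → ℝ} (hμ : ∀ x, 0 < μ x) : 0 < volV μ :=
  sum_pos (fun x _ => hμ x) univ_nonempty

section Operator

variable [Fintype V] [DecidableEq V] {μ : V → ℝ} {W : V → V → ℝ} {v : V → ℝ} {c q : ℝ}

theorem opL_neg (μ : V → ℝ) (W : V → V → ℝ) (v : V → ℝ) (x : V) :
    opL μ W (-v) x = -opL μ W v x := by
  simp only [opL, Pi.neg_apply, ← mul_neg, ← sum_neg_distrib, neg_sub_neg, neg_sub]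

theorem opL_eq_zero_of_forall_eq {x : V} (hv : ∀ y, v y = v x) : opL μ W v x = 0 := by
  simp only [opL, hv, sub_self, mul_zero, sum_const_zero]

theorem mul_sub_le_opL_of_forall_le {x : V} (hc : 0 ≤ c) (hrate : ∀ y, x ≠ y → c ≤ W x y / μ x)
    (hmax : ∀ y, v y ≤ v x) (z : V) : c * (v x - v z) ≤ opL μ W v x := by
  have hterm : ∀ y, x ≠ y → c * (v x - v y) ≤ 1 / μ x * (W x y * (v x - v y)) := fun y hy => by
    rw [← mul_assoc, one_div_mul_eq_div]
    exact mul_le_mul_of_nonneg_right (hrate y hy) (sub_nonneg.2 (hmax y))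
  have hnonneg : ∀ y ∈ univ.filter (· ≠ x), 0 ≤ 1 / μ x * (W x y * (v x - v y)) := fun y hy =>
    (mul_nonneg hc (sub_nonneg.2 (hmax y))).trans (hterm y (mem_filter.1 hy).2.symm)
  rw [opL, mul_sum]
  rcases eq_or_ne x z with rfl | hxz
  · rw [sub_self, mul_zero]
    exact sum_nonneg hnonneg
  · exact (hterm z hxz).trans
      (single_le_sum hnonneg (mem_filter.2 ⟨mem_univ z, hxz.symm⟩))

theorem opL_le_mul_sub_of_forall_ge {x : V} (hc : 0 ≤ c) (hrate : ∀ y, x ≠ y → c ≤ W x y / μ x)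
    (hmin : ∀ y, v x ≤ v y) (z : V) : opL μ W v x ≤ c * (v x - v z) := by
  have h := mul_sub_le_opL_of_forall_le (v := -v) hc hrate (fun y => neg_le_neg (hmin y)) z
  rw [opL_neg, Pi.neg_apply, Pi.neg_apply] at h
  linarith

theorem eq_of_opL_eq_exp_sub (hq : 0 < q) (hqc : q ≤ c)
    (hrate : ∀ x y, x ≠ y → c ≤ W x y / μ x) (hv : ∀ x, opL μ W v x = exp (v x) - q) (x y : V) :
    v x = v y := by
  have : Nonempty V := ⟨x⟩
  have hc : 0 ≤ c := hq.le.trans hqc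
  obtain ⟨a, ha⟩ := Finite.exists_max v
  obtain ⟨b, hb⟩ := Finite.exists_min v
  have hexp_max : q + c * (v a - v b) ≤ exp (v a) := by
    linarith [hv a, mul_sub_le_opL_of_forall_le hc (hrate a) ha b]
  have hexp_min : exp (v b) ≤ q - c * (v a - v b) := by
    linarith [hv b, opL_le_mul_sub_of_forall_ge hc (hrate b) hb a]
  have hosc : v a - v b ≤ 0 := by
    by_contra! hpos
    refine (sub_mul_exp_lt_add hq hqc hpos).not_ge ?_
    calc q + c * (v a - v b) ≤ exp (v a) := hexp_max
      _ = exp (v b) * exp (v a - v b) := by rw [← exp_add, add_sub_cancel]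
      _ ≤ (q - c * (v a - v b)) * exp (v a - v b) := by gcongr
  linarith [ha x, hb x, ha y, hb y]

theorem opL_eq_exp_sub_iff (hq : 0 < q) (hqc : q ≤ c)
    (hrate : ∀ x y, x ≠ y → c ≤ W x y / μ x) :
    (∀ x, opL μ W v x = exp (v x) - q) ↔ ∀ x, v x = log q := by
  constructor
  · intro hv x
    have hzero : opL μ W v x = 0 :=
      opL_eq_zero_of_forall_eq fun y => eq_of_opL_eq_exp_sub hq hqc hrate hv y x
    rw [← sub_eq_zero.1 ((hv x).symm.trans hzero), log_exp]
  · intro hv x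
    rw [opL_eq_zero_of_forall_eq fun y => (hv y).trans (hv x).symm, hv x, exp_log hq, sub_self]

end Operator

theorem unique_solution_small_eps_general [Fintype V] [Nonempty V] [DecidableEq V]
    (μ : V → ℝ) (W : V → V → ℝ)
    (hμ : ∀ x, 0 < μ x)
    (hWpos : ∀ x y, x ≠ y → 0 < W x y) :
    ∃ ε₀ : ℝ, 0 < ε₀ ∧ ∀ ε : ℝ, 0 < ε → ε < ε₀ →
      ∀ v : V → ℝ,
        (∀ x, opL μ W v x = Real.exp (v x) - ε / volV μ) ↔
        (∀ x, v x = Real.log (ε / volV μ)) := by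
  obtain ⟨c, hc, hrate⟩ := exists_pos_forall_le_of_forall_pos
    (p := fun e : V × V => e.1 ≠ e.2) (f := fun e => W e.1 e.2 / μ e.1)
    fun e he => div_pos (hWpos e.1 e.2 he) (hμ e.1)
  have hvol : 0 < volV μ := volV_pos hμ
  refine ⟨c * volV μ, mul_pos hc hvol, fun ε hε hlt v => ?_⟩
  exact opL_eq_exp_sub_iff (div_pos hε hvol) ((div_lt_iff₀ hvol).2 hlt).le
    fun x y => hrate (x, y)

/-- There exists `ε₀ > 0` such that for every `ε ∈ (0, ε₀)` the constant function
`log(ε/|V|)` is the unique solution of `Lv = e^v − ε/|V|`. -/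
theorem unique_solution_small_eps [Fintype V] [Nonempty V] [DecidableEq V]
    (μ : V → ℝ) (W : V → V → ℝ)
    (hμ : ∀ x, 0 < μ x)
    (hWsym : ∀ x y, W x y = W y x)
    (hWpos : ∀ x y, x ≠ y → 0 < W x y) :
    ∃ ε₀ : ℝ, 0 < ε₀ ∧ ∀ ε : ℝ, 0 < ε → ε < ε₀ →
      ∀ v : V → ℝ,
        (∀ x, opL μ W v x = Real.exp (v x) - ε / volV μ) ↔
        (∀ x, v x = Real.log (ε / volV μ)) :=
  unique_solution_small_eps_general μ W hμ hWpos
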